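/- Let R be a commutative ring, p ≥ 2, and let w_1, …, w_{p−2}, x, y, a, b be vectors in R^p. For vectors u, v ∈ R^p, let D(u,v) denote the determinant of the p×p matrix whose rows are w_1, …, w_{p−2}, u, v in this order. Then the following Plücker relation holds: D(x,a)·D(y,b) − D(y,a)·D(x,b) = D(x,y)·D(a,b). -/

import Mathlib

/-- `plueckerD w u v` is the determinant of the `p × p` matrix whose rows are
`w 0, …, w (p-3), u, v` in this order (rows `0, …, p-3` come from the family `w`,
row `p-2` is `u`, and row `p-1` is `v`). -/
noncomputable def plueckerD {R : Type*} [CommRing R] {p : ℕ} (w : ℕ → Fin p → R)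
    (u v : Fin p → R) : R :=
  (Matrix.of (fun k : Fin p =>
    if (k : ℕ) < p - 2 then w (k : ℕ) else if (k : ℕ) = p - 2 then u else v)).det

theorem plueckerD_row_lt {R : Type*} [CommRing R] {n : ℕ} (w : ℕ → Fin (n+2) → R)
    (u : Fin (n+2) → R) (k : Fin (n+2)) (hk : (k : ℕ) < n) : plueckerD w u (w k) = 0 := by
  unfold plueckerD
  refine Matrix.det_zero_of_row_eq (i := k) (j := Fin.last (n+1)) ?_ ?_
  · intro h
    rw [h] at hk
    simp at hk
  · funext j
    simp [hk]

theorem plueckerD_self {R : Type*} [CommRing R] {n : ℕ} (w : ℕ → Fin (n+2) → R)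
    (u : Fin (n+2) → R) : plueckerD w u u = 0 := by
  unfold plueckerD
  refine Matrix.det_zero_of_row_eq (i := ⟨n, by omega⟩) (j := Fin.last (n+1)) ?_ ?_
  · intro h
    simp [Fin.ext_iff] at h
  · funext j
    simp

theorem plueckerD_update_snd {R : Type*} [CommRing R] {n : ℕ} (w : ℕ → Fin (n+2) → R)
    (u v v' : Fin (n+2) → R) : plueckerD w u v' = ((Matrix.of (fun k : Fin (n+2) =>
    if (k : ℕ) < n + 2 - 2 then w (k : ℕ) else if (k : ℕ) = n + 2 - 2 then u else v)).updateRow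
      (Fin.last (n+1)) v').det := by
  unfold plueckerD
  congr 1
  ext k j
  rw [Matrix.updateRow_apply]
  by_cases h : k = Fin.last (n+1)
  · subst h
    simp
  · have : (k : ℕ) ≠ n + 1 := fun h' => h (Fin.ext h')
    have h2 : (k : ℕ) < n ∨ (k : ℕ) = n := by omega
    rcases h2 with h2 | h2 <;> simp [h, h2]

theorem plueckerD_update_fst {R : Type*} [CommRing R] {n : ℕ} (w : ℕ → Fin (n+2) → R)
    (u v u' : Fin (n+2) → R) : plueckerD w u' v = ((Matrix.of (fun k : Fin (n+2) =>
    if (k : ℕ) < n + 2 - 2 then w (k : ℕ) else if (k : ℕ) = n + 2 - 2 then u else v)).updateRow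
      ⟨n, by omega⟩ u').det := by
  unfold plueckerD
  congr 1
  ext k j
  rw [Matrix.updateRow_apply]
  by_cases h : (k : ℕ) = n
  · simp [h, Fin.ext_iff]
  · simp [h, Fin.ext_iff]

/-- `plueckerD` as a linear map in the last argument. -/
theorem plueckerD_linear_snd {R : Type*} [CommRing R] {n : ℕ} (w : ℕ → Fin (n+2) → R)
    (u : Fin (n+2) → R) :
    ∃ f : (Fin (n+2) → R) →ₗ[R] R, ∀ v, f v = plueckerD w u v :=
  ⟨{ toFun := fun v => plueckerD w u v
     map_add' := fun v v' => by
      simp only [plueckerD_update_snd w u 0, Matrix.det_updateRow_add]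
     map_smul' := fun c v => by
      simp only [plueckerD_update_snd w u 0, Matrix.det_updateRow_smul, smul_eq_mul,
        RingHom.id_apply] }, fun _ => rfl⟩

theorem plueckerD_add_fst {R : Type*} [CommRing R] {n : ℕ} (w : ℕ → Fin (n+2) → R)
    (u u' v : Fin (n+2) → R) :
    plueckerD w (u + u') v = plueckerD w u v + plueckerD w u' v := by
  simp only [plueckerD_update_fst w 0 v, Matrix.det_updateRow_add]

theorem plueckerD_swap {R : Type*} [CommRing R] {n : ℕ} (w : ℕ → Fin (n+2) → R)
    (u v : Fin (n+2) → R) : plueckerD w u v = - plueckerD w v u := by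
  have h := plueckerD_self w (u + v)
  obtain ⟨f, hf⟩ := plueckerD_linear_snd w (u + v)
  rw [← hf, map_add, hf, hf, plueckerD_add_fst, plueckerD_add_fst, plueckerD_self,
    plueckerD_self] at h
  linear_combination h

/-- the Plücker relation
`D(x,a)·D(y,b) − D(y,a)·D(x,b) = D(x,y)·D(a,b)` for the determinants `D(u,v)` of the
`p × p` matrices (`p ≥ 2`) whose rows are `w 0, …, w (p-3), u, v` in this order. -/
theorem stmt5 {R : Type*} [CommRing R] {p : ℕ} (hp : 2 ≤ p)
    (w : ℕ → Fin p → R) (x y a b : Fin p → R) :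
    plueckerD w x a * plueckerD w y b - plueckerD w y a * plueckerD w x b
      = plueckerD w x y * plueckerD w a b := by
  obtain ⟨n, rfl⟩ : ∃ n, p = n + 2 := ⟨p - 2, by omega⟩
  obtain ⟨f, hf⟩ := plueckerD_linear_snd w a
  set M : Matrix (Fin (n+2)) (Fin (n+2)) R := Matrix.of (fun k : Fin (n+2) =>
    if (k : ℕ) < n + 2 - 2 then w (k : ℕ) else if (k : ℕ) = n + 2 - 2 then x else y) with hM
  have hdet : M.det = plueckerD w x y := rfl
  have key : ∑ k, (M.updateRow k b).det • M k = M.det • b := by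
    have h := Matrix.mulVec_cramer M.transpose b
    rw [Matrix.det_transpose] at h
    rw [← h]
    funext j
    simp [Matrix.mulVec, dotProduct, Matrix.cramer_transpose_apply, mul_comm]
  have h2 := congrArg f key
  rw [map_sum, map_smul, hf, hdet, Fin.sum_univ_castSucc, Fin.sum_univ_castSucc,
    Finset.sum_eq_zero] at h2
  · have e1 : (Fin.last n).castSucc = (⟨n, by omega⟩ : Fin (n+2)) := rfl
    have r1 : M ⟨n, by omega⟩ = x := by
      funext j
      simp [hM]
    have r2 : M (Fin.last (n+1)) = y := by
      funext j
      simp [hM]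
    rw [e1, map_smul, map_smul, r1, r2, hf, hf, hM, ← plueckerD_update_fst,
      ← plueckerD_update_snd] at h2
    simp only [smul_eq_mul] at h2
    rw [plueckerD_swap w b y, plueckerD_swap w a x, plueckerD_swap w a y] at h2
    linear_combination h2
  · intro k _
    have r : M k.castSucc.castSucc = w ((k.castSucc.castSucc : Fin (n+2)) : ℕ) := by
      funext j
      simp [hM]
    rw [map_smul, r, hf, plueckerD_row_lt w a _ (by simp), smul_zero]
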